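/- arXiv:2105.14508 — 3 statements merged into one kernel-verified Lean document; each statement's English description precedes it below -/
import Mathlib

section
/- Let q > 2 be an even prime power, r ≥ 3, and let B be the hypersurface of PG(r,q²) defined below (with the stated conditions on α and β). Then B spans PG(r,q²), the projective code C(B) has length N = q^{2r−1}+q^{2(r−2)}+q^{2(r−3)}+⋯+q²+1 and dimension r+1, and C(B) is q-divisible: for every hyperplane Σ of PG(r,q²), q divides |B| − |B ∩ Σ|. -/
/-- The affine equation
`x_r^q − x_r + α^q(x₁^{2q}+⋯+x_{r−1}^{2q}) − α(x₁²+⋯+x_{r−1}²)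
  = (β^q−β)(x₁^{q+1}+⋯+x_{r−1}^{q+1})`. -/
def affEq {F : Type*} [Field F] (q r : ℕ) (α β : F) (x : Fin (r + 1) → F) : Prop :=
  x (Fin.last r) ^ q - x (Fin.last r)
      + α ^ q * (∑ i : Fin (r + 1), if 1 ≤ i.1 ∧ i.1 < r then x i ^ (2 * q) else 0)
      - α * (∑ i : Fin (r + 1), if 1 ≤ i.1 ∧ i.1 < r then x i ^ 2 else 0)
    = (β ^ q - β) * (∑ i : Fin (r + 1), if 1 ≤ i.1 ∧ i.1 < r then x i ^ (q + 1) else 0)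

/-- The hypersurface `B` of `PG(r,q²)` (in the `q` even form): the affine points
(X₀ ≠ 0) whose affine coordinates satisfy `affEq`, together with the points at
infinity (X₀ = 0) satisfying `X₁ + ⋯ + X_{r−1} = 0`. -/
noncomputable def BsetE (F : Type*) [Field F] (q r : ℕ) (α β : F) :
    Set (Projectivization F (Fin (r + 1) → F)) :=
  {P | (P.rep 0 ≠ 0 ∧ affEq q r α β fun i => P.rep i / P.rep 0) ∨
       (P.rep 0 = 0 ∧ (∑ i : Fin (r + 1), if 1 ≤ i.1 ∧ i.1 < r then P.rep i else 0) = 0)}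

/-- The projective code of the projective system `V`, as the linear map sending a
functional `f` to the codeword of its evaluations at the representative vectors of
the points of `V`; the code itself is the range of this map. -/
noncomputable def codeMap {F W : Type*} [Field F] [AddCommGroup W] [Module F W]
    (V : Set (Projectivization F W)) : Module.Dual F W →ₗ[F] (↥V → F) where
  toFun f := fun P => f P.1.rep
  map_add' f g := rfl
  map_smul' a f := rfl

/-!
Let `K = GF(q) ⊆ F`. In every characteristic the affine equation of `B` says that
`x_r + ∑ (α x_i² − β x_i^(q+1))` lies in `K`, and the sum is a `K`-quadratic map. Composing with a
`K`-linear functional on `F` whose kernel is `K` turns the affine part of a hyperplane section of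
`B` into a quadric, not necessarily homogeneous, in an affine space over `K` of dimension at least
`2(r-1) ≥ 3`.

Such a quadric has a number of points divisible by `q`. Indeed, by Chevalley–Warning its quadratic
part vanishes at some vector `v ≠ 0`, so on each line of direction `v` the equation is affine and
has one solution if its slope is nonzero, and `0` or `q` solutions otherwise. The slope is an affine
function on a complement of `v`, of dimension at least `2`, hence it is nonzero at a number of
points divisible by `q`.

The points at infinity of the section form a nonempty projective space over `F`, so the section has
`1` point modulo `q`, and so does `B`, which is the section by the zero functional.
-/

open Module
open scoped LinearAlgebra.Projectivization

section QuadraticCounting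

variable {K V : Type*} [Field K] [AddCommGroup V] [Module K V]

theorem finrank_le_finrank_inf_ker_add_one [FiniteDimensional K V] (W : Submodule K V)
    (f : Dual K V) : finrank K W ≤ finrank K ↥(W ⊓ LinearMap.ker f) + 1 := by
  have rank_nullity := (f.domRestrict W).finrank_range_add_finrank_ker
  have range_le := (LinearMap.range (f.domRestrict W)).finrank_le
  rw [← Submodule.finrank_map_subtype_eq, LinearMap.ker_domRestrict,
    Submodule.map_comap_subtype] at rank_nullity
  rw [finrank_self] at range_le
  omega

theorem natCard_dvd_natCard_dual_fiber [FiniteDimensional K V] (hV : 2 ≤ finrank K V)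
    (f : Dual K V) (a : K) : Nat.card K ∣ Nat.card {v // f v = a} := by
  by_cases h : ∃ u, f u = a
  · obtain ⟨u, rfl⟩ := h
    have translate : {v // f v = f u} ≃ LinearMap.ker f :=
      (Equiv.subRight u).subtypeEquiv fun v => by simp [sub_eq_zero]
    have ker_pos : finrank K (LinearMap.ker f) ≠ 0 := by
      have := finrank_le_finrank_inf_ker_add_one ⊤ f
      rw [finrank_top, top_inf_eq] at this
      omega
    rw [Nat.card_congr translate, natCard_eq_pow_finrank (K := K) (V := LinearMap.ker f)]
    exact dvd_pow_self _ ker_pos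
  · have : IsEmpty {v // f v = a} := ⟨fun v => h ⟨v, v.2⟩⟩
    simp

open MvPolynomial in
theorem exists_isotropic_vector [Finite K] (Q : QuadraticForm K V) (hV : 3 ≤ finrank K V) :
    ∃ v, v ≠ 0 ∧ Q v = 0 := by
  classical
  have := Fintype.ofFinite K
  have := finite_of_finrank_pos (R := K) (M := V) (by omega)
  obtain ⟨p, _⟩ := CharP.exists K
  have hp : p.Prime := CharP.char_is_prime K p
  obtain ⟨B, rfl⟩ := LinearMap.BilinMap.toQuadraticMap_surjective Q
  let b := finBasis K V
  let P : MvPolynomial (Fin (finrank K V)) K := ∑ i, ∑ j, C (B (b i) (b j)) * (X i * X j)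
  have eval_P (x) : eval x P = B.toQuadraticMap (b.equivFun.symm x) := by
    simp only [P, map_sum, map_mul, eval_C, eval_X, LinearMap.BilinMap.toQuadraticMap_apply,
      Basis.equivFun_symm_apply, map_smul, LinearMap.sum_apply, LinearMap.smul_apply, smul_eq_mul,
      Finset.mul_sum]
    rw [Finset.sum_comm]
    exact Finset.sum_congr rfl fun i _ => Finset.sum_congr rfl fun j _ => by ring
  have degree_P : P.totalDegree ≤ 2 :=
    totalDegree_finsetSum_le fun i _ => totalDegree_finsetSum_le fun j _ =>
      (totalDegree_mul _ _).trans <| by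
        grw [totalDegree_C, totalDegree_mul, totalDegree_X, totalDegree_X]
  have card_zeros := char_dvd_card_solutions p (f := P) (by rw [Fintype.card_fin]; omega)
  let origin : {x // eval x P = 0} := ⟨0, by rw [eval_P, map_zero, map_zero]⟩
  have : Nonempty {x // eval x P = 0} := ⟨origin⟩
  have : Nontrivial {x // eval x P = 0} := Fintype.one_lt_card_iff_nontrivial.mp <|
    hp.one_lt.trans_le (Nat.le_of_dvd Fintype.card_pos card_zeros)
  obtain ⟨⟨x, hx⟩, hx0⟩ := exists_ne origin
  exact ⟨b.equivFun.symm x, b.equivFun.symm.map_ne_zero_iff.mpr fun h => hx0 (Subtype.ext h),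
    by rwa [← eval_P]⟩

theorem natCard_mul_eq_modEq (a c : K) [Decidable (a = 0)] :
    Nat.card {t : K // t * a = c} ≡ if a = 0 then 0 else 1 [MOD Nat.card K] := by
  split_ifs with ha
  · by_cases hc : c = 0
    · simp [ha, hc, Nat.ModEq]
    · simp [ha, Ne.symm hc, Nat.ModEq]
  · simp [← eq_div_iff ha, Nat.ModEq]

/-- The splitting of `V` into the kernel of `g` and the line spanned by a vector `v` with
`g v = 1`. -/
def kerProdEquiv (g : Dual K V) {v : V} (hv : g v = 1) : LinearMap.ker g × K ≃ V where
  toFun p := p.1 + p.2 • v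
  invFun x := (⟨x - g x • v, by simp [hv]⟩, g x)
  left_inv p := by ext <;> simp [hv]
  right_inv x := by simp

theorem natCard_quadric_modEq_of_isotropic [Finite K] [FiniteDimensional K V]
    (Q : QuadraticForm K V) (f g : Dual K V) (c : K) {v : V} (hQv : Q v = 0) (hgv : g v = 1) :
    Nat.card {x // Q x + f x = c} ≡
      Nat.card {u : LinearMap.ker g // Q.polarBilin v u + f v ≠ 0} [MOD Nat.card K] := by
  classical
  have := Module.finite_of_finite K (M := V)
  let := Fintype.ofFinite (LinearMap.ker g)
  let slope (u : V) : K := Q.polarBilin v u + f v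
  have restrict_line (u : V) (t : K) : Q (u + t • v) + f (u + t • v) = c ↔
      t * slope u = c - (Q u + f u) := by
    rw [QuadraticMap.map_add Q, QuadraticMap.map_smul, hQv, map_add f, map_smul f,
      QuadraticMap.polar_smul_right, QuadraticMap.polar_comm Q u v]
    simp only [smul_eq_mul, slope, QuadraticMap.polarBilin_apply_apply]
    constructor <;> intro h <;> linear_combination h
  have lines : {x // Q x + f x = c} ≃
      Σ u : LinearMap.ker g, {t : K // t * slope u = c - (Q u + f u)} :=
    ((kerProdEquiv g hgv).symm.subtypeEquiv fun x => by
      rw [← restrict_line]; simp [kerProdEquiv]).trans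
      (Equiv.subtypeProdEquivSigmaSubtype fun (u : LinearMap.ker g) t =>
        t * slope u = c - (Q u + f u))
  calc Nat.card {x // Q x + f x = c}
      = ∑ u : LinearMap.ker g, Nat.card {t : K // t * slope u = c - (Q u + f u)} := by
        rw [Nat.card_congr lines, Nat.card_sigma]
    _ ≡ ∑ u : LinearMap.ker g, (if slope u = 0 then 0 else 1) [MOD Nat.card K] :=
        Nat.ModEq.sum fun u _ => natCard_mul_eq_modEq _ _
    _ = Nat.card {u : LinearMap.ker g // slope u ≠ 0} := by
        simp only [Nat.card_eq_fintype_card, Fintype.card_subtype, Finset.card_filter, ite_not]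

theorem natCard_dvd_natCard_quadric [Finite K] (hV : 3 ≤ finrank K V) (Q : QuadraticForm K V)
    (f : Dual K V) (c : K) : Nat.card K ∣ Nat.card {v // Q v + f v = c} := by
  classical
  have := finite_of_finrank_pos (R := K) (M := V) (by omega)
  have := Module.finite_of_finite K (M := V)
  obtain ⟨v, hv0, hQv⟩ := exists_isotropic_vector Q hV
  obtain ⟨g, hgv⟩ := Projective.exists_dual_eq_one K hv0
  have finrank_ker : 2 ≤ finrank K (LinearMap.ker g) := by
    have := finrank_le_finrank_inf_ker_add_one ⊤ g
    rw [finrank_top, top_inf_eq] at this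
    omega
  have dvd_card_ker : Nat.card K ∣ Nat.card (LinearMap.ker g) := by
    rw [natCard_eq_pow_finrank (K := K) (V := LinearMap.ker g)]
    exact dvd_pow_self _ (by omega)
  have dvd_card_slope_zero :
      Nat.card K ∣ Nat.card {u : LinearMap.ker g // Q.polarBilin v u + f v = 0} := by
    simp only [add_eq_zero_iff_eq_neg]
    exact natCard_dvd_natCard_dual_fiber finrank_ker ((Q.polarBilin v).domRestrict _) (-f v)
  rw [(natCard_quadric_modEq_of_isotropic Q f g c hQv hgv).dvd_iff dvd_rfl,
    ← Nat.dvd_add_right dvd_card_slope_zero, ← Nat.card_sum,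
    Nat.card_congr (Equiv.sumCompl fun u : LinearMap.ker g => Q.polarBilin v u + f v = 0)]
  exact dvd_card_ker

theorem natCard_dvd_natCard_affine_quadric [Finite K] (H : Submodule K V) (hH : 3 ≤ finrank K H)
    (Q : QuadraticForm K V) (f : Dual K V) (a : V) (c : K) :
    Nat.card K ∣ Nat.card {x // x - a ∈ H ∧ Q x + f x = c} := by
  let translate : {x // x - a ∈ H ∧ Q x + f x = c} ≃ {h : H // Q (h + a) + f (h + a) = c} :=
    ((Equiv.subRight a).subtypeEquiv fun x => by simp).trans
      (Equiv.subtypeSubtypeEquivSubtypeInter (· ∈ H) fun h => Q (h + a) + f (h + a) = c).symm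
  have expand (h : H) : Q (h + a) + f (h + a) = c ↔
      Q.comp H.subtype h + ((f + Q.polarBilin a).domRestrict H) h = c - (Q a + f a) := by
    rw [QuadraticMap.map_add Q, map_add f, QuadraticMap.polar_comm]
    simp only [QuadraticMap.comp_apply, Submodule.subtype_apply, LinearMap.domRestrict_apply,
      LinearMap.add_apply, QuadraticMap.polarBilin_apply_apply]
    constructor <;> intro h <;> linear_combination h
  rw [Nat.card_congr translate, Nat.card_congr (Equiv.subtypeEquivRight expand)]
  exact natCard_dvd_natCard_quadric hH _ _ _

end QuadraticCounting

section FiniteFields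

open Polynomial in
theorem pow_card_eq_self_iff_mem_range_algebraMap {K F : Type*} [Field K] [Fintype K] [Field F]
    [Algebra K F] {z : F} : z ^ Fintype.card K = z ↔ z ∈ Set.range (algebraMap K F) := by
  refine ⟨fun hz => ?_, ?_⟩
  · have splits : (X ^ Fintype.card K - X : K[X]).Splits := by
      rw [splits_iff_card_roots, FiniteField.roots_X_pow_card_sub_X,
        FiniteField.X_pow_card_sub_X_natDegree_eq K Fintype.one_lt_card]
      exact Finset.card_univ
    have root : z ∈ ((X ^ Fintype.card K - X : K[X]).map (algebraMap K F)).roots := by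
      simpa [mem_roots, FiniteField.X_pow_card_sub_X_ne_zero F Fintype.one_lt_card, sub_eq_zero]
        using hz
    rw [splits.roots_map, FiniteField.roots_X_pow_card_sub_X, Multiset.mem_map] at root
    exact root.imp fun _ => And.right
  · rintro ⟨a, rfl⟩
    rw [← map_pow, FiniteField.pow_card]

theorem natCard_pow_card_eq_self {K F : Type*} [Field K] [Fintype K] [Field F] [Algebra K F] :
    Nat.card {z : F // z ^ Fintype.card K = z} = Fintype.card K := by
  simp only [pow_card_eq_self_iff_mem_range_algebraMap]
  rw [← Nat.card_eq_fintype_card]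
  exact Nat.card_range_of_injective (algebraMap K F).injective

theorem exists_subfield_natCard_eq {F : Type*} [Field F] [Finite F] {q n : ℕ} (hq : IsPrimePow q)
    (hF : Nat.card F = q ^ n) : ∃ K : Subfield F, Nat.card K = q := by
  obtain ⟨p, m, hp, hm, rfl⟩ := hq
  have : Fact p.Prime := ⟨hp.nat_prime⟩
  have := Fintype.ofFinite F
  have : CharP F p := charP_of_card_eq_prime_pow (f := m * n) <| by
    rw [← Nat.card_eq_fintype_card, hF, pow_mul]
  let := ZMod.algebra F p
  have finrank_F : finrank (ZMod p) F = m * n := Nat.pow_right_injective hp.nat_prime.two_le <| by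
    simp only [FiniteField.pow_finrank_eq_natCard, hF, pow_mul]
  obtain ⟨φ⟩ := FiniteField.nonempty_algHom_of_finrank_dvd (F := ZMod p) (K := GaloisField p m)
    (L := F) (by rw [GaloisField.finrank p hm.ne', finrank_F]; exact dvd_mul_right m n)
  exact ⟨φ.toRingHom.fieldRange,
    (Nat.card_range_of_injective φ.injective).trans (GaloisField.card p m hm.ne')⟩

theorem exists_dual_ker_eq {K V : Type*} [Field K] [AddCommGroup V] [Module K V]
    (W : Submodule K V) (hW : finrank K W + 1 = finrank K V) :
    ∃ f : Dual K V, LinearMap.ker f = W := by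
  have := FiniteDimensional.of_finrank_pos (K := K) (V := V) (by omega)
  have finrank_quotient : finrank K (V ⧸ W) = finrank K K := by
    have := W.finrank_quotient_add_finrank
    rw [finrank_self]
    omega
  exact ⟨(LinearEquiv.ofFinrankEq _ _ finrank_quotient).toLinearMap ∘ₗ W.mkQ, by
    rw [LinearEquiv.ker_comp, W.ker_mkQ]⟩

theorem exists_dual_eq_zero_iff_pow_card_eq_self {K F : Type*} [Field K] [Fintype K] [Field F]
    [Algebra K F] (h : finrank K F = 2) :
    ∃ f : Dual K F, ∀ z, f z = 0 ↔ z ^ Fintype.card K = z := by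
  obtain ⟨f, hf⟩ := exists_dual_ker_eq (1 : Submodule K F) (by
    rw [h, Submodule.one_eq_span, finrank_span_singleton one_ne_zero])
  exact ⟨f, fun z => by
    rw [pow_card_eq_self_iff_mem_range_algebraMap, ← LinearMap.mem_ker, hf, Submodule.mem_one]; rfl⟩

end FiniteFields

section Projective

open Projectivization

variable {F V : Type*} [Field F] [AddCommGroup V] [Module F V]

theorem natCard_rep_mem (W : Submodule F V) :
    Nat.card {P : ℙ F V // P.rep ∈ W} = Nat.card (ℙ F W) := by
  have range_map : Set.range (map W.subtype W.injective_subtype) = {P : ℙ F V | P.rep ∈ W} := by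
    ext P
    constructor
    · rintro ⟨Q, rfl⟩
      induction Q with | h w hw =>
      obtain ⟨a, ha⟩ := exists_smul_eq_mk_rep F (w : V) (by simpa using hw)
      rw [map_mk, Set.mem_ofPred_eq]
      exact ha ▸ W.smul_mem a w.2
    · intro hP
      exact ⟨mk F ⟨P.rep, hP⟩ fun h => P.rep_nonzero (congrArg Subtype.val h), P.mk_rep⟩
  rw [← Set.coe_ofPred, ← range_map, Nat.card_range_of_injective (map_injective _ _)]

theorem natCard_projectivization_modEq_one [Finite F] (hV : finrank F V ≠ 0) :
    Nat.card (ℙ F V) ≡ 1 [MOD Nat.card F] := by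
  obtain ⟨n, hn⟩ := Nat.exists_eq_succ_of_ne_zero hV
  rw [card_of_finrank F V hn, Finset.sum_range_succ', pow_zero]
  simpa using (Nat.modEq_zero_iff_dvd.mpr <| Finset.dvd_sum fun i _ =>
    dvd_pow_self (Nat.card F) i.succ_ne_zero).add_right 1

/-- The identification of the complement of the hyperplane `f = 0` in `ℙ F V` with the affine
hyperplane `f = 1` of `V`, scaling representatives. -/
noncomputable def affineChart (f : Dual F V) : {P : ℙ F V // f P.rep ≠ 0} ≃ {v // f v = 1} where
  toFun P := ⟨(f P.1.rep)⁻¹ • P.1.rep, by rw [map_smul, smul_eq_mul, inv_mul_cancel₀ P.2]⟩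
  invFun v := ⟨mk F v.1 fun h => by simpa [h] using v.2, by
    obtain ⟨a, ha⟩ := exists_smul_eq_mk_rep F v.1 fun h => by simpa [h] using v.2
    simp [← ha, v.2, Units.smul_def]⟩
  left_inv P := Subtype.ext <| by
    conv_rhs => rw [← P.1.mk_rep]
    exact (mk_eq_mk_iff' _ _ _ _ _).mpr ⟨_, rfl⟩
  right_inv v := Subtype.ext <| by
    obtain ⟨a, ha⟩ := exists_smul_eq_mk_rep F v.1 fun h => by simpa [h] using v.2
    simp [← ha, v.2, Units.smul_def]

theorem natCard_affine_or_mem [Finite (ℙ F V)] (f : Dual F V) (p : V → Prop) {W : Submodule F V}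
    (hW : W ≤ LinearMap.ker f) :
    Nat.card {P : ℙ F V // (f P.rep ≠ 0 ∧ p ((f P.rep)⁻¹ • P.rep)) ∨ P.rep ∈ W} =
      Nat.card {v // f v = 1 ∧ p v} + Nat.card (ℙ F W) := by
  classical
  have disjoint : Disjoint (fun P : ℙ F V => f P.rep ≠ 0 ∧ p ((f P.rep)⁻¹ • P.rep))
      fun P => P.rep ∈ W := by
    rw [Pi.disjoint_iff]
    simp only [Prop.disjoint_iff]
    exact fun P h => h.1.1 (hW h.2)
  have chart : {P : ℙ F V // f P.rep ≠ 0 ∧ p ((f P.rep)⁻¹ • P.rep)} ≃ {v // f v = 1 ∧ p v} :=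
    (Equiv.subtypeSubtypeEquivSubtypeInter _ _).symm.trans <|
      ((affineChart f).subtypeEquiv fun P => Iff.rfl).trans <|
        Equiv.subtypeSubtypeEquivSubtypeInter _ p
  rw [Nat.card_congr (subtypeOrEquiv _ _ disjoint), Nat.card_sum, Nat.card_congr chart,
    natCard_rep_mem]

theorem mem_span_rep_of_mk_mem {S : Set (ℙ F V)} {v : V} {hv : v ≠ 0} (h : mk F v hv ∈ S) :
    v ∈ Submodule.span F (Projectivization.rep '' S) := by
  obtain ⟨a, ha⟩ := exists_smul_eq_mk_rep F v hv
  rw [← (Submodule.span F _).smul_mem_iff_of_isUnit a.isUnit]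
  exact Submodule.subset_span ⟨_, h, ha.symm⟩

theorem finrank_range_codeMap {S : Set (ℙ F V)}
    (hS : Submodule.span F (Projectivization.rep '' S) = ⊤) :
    finrank F (LinearMap.range (codeMap S)) = finrank F V := by
  have injective : Function.Injective (codeMap S) := fun f g hfg =>
    LinearMap.ext_on hS <| by
      rintro _ ⟨P, hP, rfl⟩
      exact congrFun hfg ⟨P, hP⟩
  rw [LinearMap.finrank_range_of_inj injective, Subspace.dual_finrank_eq]

end Projective

section Hypersurface

variable {r : ℕ}

theorem sum_ite_eq_sum_Ioo {M : Type*} [AddCommMonoid M] (g : Fin (r + 1) → M) :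
    (∑ i : Fin (r + 1), if 1 ≤ i.1 ∧ i.1 < r then g i else 0) =
      ∑ i ∈ Finset.Ioo 0 (Fin.last r), g i := by
  rw [← Finset.sum_filter]
  refine Finset.sum_congr (Finset.ext fun i => ?_) fun _ _ => rfl
  rw [Finset.mem_filter_univ, Finset.mem_Ioo]
  rfl

section AffinePart

variable (K : Type*) {F : Type*} [Field K] [Fintype K] [Field F] [Algebra K F]

/-- The quadratic map `z ↦ α z² − β z^(q+1)` on `F`, where `q` is the order of `K`. -/
noncomputable def coordinateForm (α β : F) : QuadraticMap K F F :=
  LinearMap.BilinMap.toQuadraticMap <| (LinearMap.mul K F).compl₂ <|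
    α • LinearMap.id - β • (FiniteField.frobeniusAlgHom K F).toLinearMap

theorem coordinateForm_apply (α β z : F) :
    coordinateForm K α β z = α * z ^ 2 - β * z ^ (Fintype.card K + 1) := by
  simp only [coordinateForm, LinearMap.BilinMap.toQuadraticMap_apply, LinearMap.compl₂_apply,
    LinearMap.mul_apply', LinearMap.sub_apply, LinearMap.smul_apply, LinearMap.id_apply,
    AlgHom.toLinearMap_apply, FiniteField.frobeniusAlgHom_apply, smul_eq_mul]
  ring

/-- The quadratic map over `K` on `F^(r+1)` that is the sum of `coordinateForm K α β` over the
coordinates `x₁, …, x_{r-1}`. The affine points of the hypersurface `B` are those for which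
`x_r + middleForm K r α β x` lies in `K`. -/
noncomputable def middleForm (r : ℕ) (α β : F) : QuadraticMap K (Fin (r + 1) → F) F :=
  ∑ i ∈ Finset.Ioo 0 (Fin.last r), (coordinateForm K α β).comp (LinearMap.proj i)

theorem middleForm_apply (α β : F) (x : Fin (r + 1) → F) :
    middleForm K r α β x =
      ∑ i ∈ Finset.Ioo 0 (Fin.last r), (α * x i ^ 2 - β * x i ^ (Fintype.card K + 1)) := by
  simp [middleForm, coordinateForm_apply]

theorem middleForm_add_single_last (α β : F) (x : Fin (r + 1) → F) (t : F) :
    middleForm K r α β (x + Pi.single (Fin.last r) t) = middleForm K r α β x := by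
  simp only [middleForm_apply]
  refine Finset.sum_congr rfl fun i hi => ?_
  rw [Pi.add_apply, Pi.single_eq_of_ne (Finset.mem_Ioo.mp hi).2.ne, add_zero]

variable {K}

theorem middleForm_pow_card (h : finrank K F = 2) (α β : F) (x : Fin (r + 1) → F) :
    middleForm K r α β x ^ Fintype.card K =
      α ^ Fintype.card K * ∑ i ∈ Finset.Ioo 0 (Fin.last r), x i ^ (2 * Fintype.card K) -
        β ^ Fintype.card K * ∑ i ∈ Finset.Ioo 0 (Fin.last r), x i ^ (Fintype.card K + 1) := by
  have := FiniteDimensional.of_finrank_pos (K := K) (V := F) (by omega)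
  have := Module.finite_of_finite K (M := F)
  have := Fintype.ofFinite F
  let σ := FiniteField.frobeniusAlgHom K F
  have pow_pow_card (z : F) : (z ^ Fintype.card K) ^ Fintype.card K = z := by
    rw [← pow_mul, ← sq, ← h, ← card_eq_pow_finrank, FiniteField.pow_card]
  change σ _ = _
  rw [middleForm_apply, map_sum, Finset.mul_sum, Finset.mul_sum, ← Finset.sum_sub_distrib]
  refine Finset.sum_congr rfl fun i _ => ?_
  simp only [map_sub, map_mul, map_pow, σ, FiniteField.frobeniusAlgHom_apply]
  rw [pow_succ _ (Fintype.card K), pow_pow_card]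
  ring

theorem affEq_iff_pow_card_eq_self (h : finrank K F = 2) (α β : F) (x : Fin (r + 1) → F) :
    affEq (Fintype.card K) r α β x ↔
      (x (Fin.last r) + middleForm K r α β x) ^ Fintype.card K =
        x (Fin.last r) + middleForm K r α β x := by
  have frobenius_add : (x (Fin.last r) + middleForm K r α β x) ^ Fintype.card K =
      x (Fin.last r) ^ Fintype.card K + middleForm K r α β x ^ Fintype.card K :=
    map_add (FiniteField.frobeniusAlgHom K F) _ _
  rw [affEq, sum_ite_eq_sum_Ioo, sum_ite_eq_sum_Ioo, sum_ite_eq_sum_Ioo, frobenius_add,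
    middleForm_pow_card h, middleForm_apply, Finset.sum_sub_distrib, ← Finset.mul_sum,
    ← Finset.mul_sum]
  constructor <;> intro h <;> linear_combination h

theorem natCard_dvd_natCard_affEq_section (h : finrank K F = 2) (hr : 3 ≤ r) (α β : F)
    (f : Dual F (Fin (r + 1) → F)) :
    Fintype.card K ∣ Nat.card {v : Fin (r + 1) → F //
      v 0 = 1 ∧ affEq (Fintype.card K) r α β v ∧ f v = 0} := by
  have := FiniteDimensional.of_finrank_pos (K := K) (V := F) (by omega)
  by_cases hne : ∃ a : Fin (r + 1) → F, a 0 = 1 ∧ f a = 0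
  · obtain ⟨a, ha0, hfa⟩ := hne
    obtain ⟨φ, hφ⟩ := exists_dual_eq_zero_iff_pow_card_eq_self h
    let H : Submodule F (Fin (r + 1) → F) := LinearMap.ker (LinearMap.proj 0) ⊓ LinearMap.ker f
    have finrank_H : 3 ≤ finrank K (H.restrictScalars K) := by
      have drop_proj := finrank_le_finrank_inf_ker_add_one (K := F) ⊤
        (LinearMap.proj 0 : Dual F (Fin (r + 1) → F))
      have drop_f : _ ≤ finrank F H + 1 := finrank_le_finrank_inf_ker_add_one _ f
      rw [finrank_top, top_inf_eq, finrank_fin_fun] at drop_proj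
      have : 2 * finrank F H = finrank K (H.restrictScalars K) := h ▸ finrank_mul_finrank K F H
      omega
    have section_iff (v : Fin (r + 1) → F) :
        v 0 = 1 ∧ affEq (Fintype.card K) r α β v ∧ f v = 0 ↔ v - a ∈ H.restrictScalars K ∧
          φ.compQuadraticMap (middleForm K r α β) v +
            (φ ∘ₗ LinearMap.proj (Fin.last r)) v = 0 := by
      rw [affEq_iff_pow_card_eq_self h, ← hφ]
      simp [H, sub_eq_zero, ha0, hfa, add_comm, and_assoc, and_comm]
    rw [Nat.card_congr (Equiv.subtypeEquivRight section_iff), ← Nat.card_eq_fintype_card]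
    exact natCard_dvd_natCard_affine_quadric _ finrank_H _ _ a 0
  · have : IsEmpty {v : Fin (r + 1) → F //
        v 0 = 1 ∧ affEq (Fintype.card K) r α β v ∧ f v = 0} :=
      ⟨fun v => hne ⟨v, v.2.1, v.2.2.2⟩⟩
    simp

variable (K) in
/-- The shear of `F^(r+1)` along the last coordinate that turns the affine equation of `B` into
the condition `x_r ^ q = x_r`. -/
noncomputable def middleShear (r : ℕ) (α β : F) : (Fin (r + 1) → F) ≃ (Fin (r + 1) → F) where
  toFun x := x + Pi.single (Fin.last r) (middleForm K r α β x)
  invFun x := x + Pi.single (Fin.last r) (-middleForm K r α β x)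
  left_inv x := by simp [middleForm_add_single_last, add_assoc, ← Pi.single_add]
  right_inv x := by simp [middleForm_add_single_last, add_assoc, ← Pi.single_add]

theorem natCard_affEq (h : finrank K F = 2) (hr : r ≠ 0) (α β : F) :
    Nat.card {v : Fin (r + 1) → F // v 0 = 1 ∧ affEq (Fintype.card K) r α β v} =
      Fintype.card K ^ (2 * r - 1) := by
  obtain ⟨n, rfl⟩ := Nat.exists_eq_succ_of_ne_zero hr
  have := FiniteDimensional.of_finrank_pos (K := K) (V := F) (by omega)
  have card_F : Nat.card F = Fintype.card K ^ 2 := by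
    rw [natCard_eq_pow_finrank (K := K), h, Nat.card_eq_fintype_card]
  let p (i : Fin (n + 2)) (z : F) : Prop :=
    (i = 0 → z = 1) ∧ (i = Fin.last (n + 1) → z ^ Fintype.card K = z)
  have straighten : {v : Fin (n + 2) → F // v 0 = 1 ∧ affEq (Fintype.card K) (n + 1) α β v} ≃
      {v : Fin (n + 2) → F // ∀ i, p i (v i)} :=
    (middleShear K (n + 1) α β).subtypeEquiv fun v => by
      rw [affEq_iff_pow_card_eq_self h]
      simp [p, middleShear, forall_and]
  calc Nat.card {v : Fin (n + 2) → F // v 0 = 1 ∧ affEq (Fintype.card K) (n + 1) α β v}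
      = ∏ i, Nat.card {z // p i z} := by
        rw [Nat.card_congr (straighten.trans Equiv.subtypePiEquivPi), Nat.card_pi]
    _ = Nat.card F ^ n * Nat.card {z : F // z ^ Fintype.card K = z} := by
        rw [Fin.prod_univ_succ, Fin.prod_univ_castSucc]
        simp [p]
    _ = Fintype.card K ^ (2 * (n + 1) - 1) := by
        rw [card_F, natCard_pow_card_eq_self, ← pow_mul, ← pow_succ]
        congr 1

theorem affEq_add_single_last (h : finrank K F = 2) (α β : F) (x : Fin (r + 1) → F) {c : F}
    (hc : c ^ Fintype.card K = c) : affEq (Fintype.card K) r α β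
      (x + Pi.single (Fin.last r) (c - (x (Fin.last r) + middleForm K r α β x))) := by
  have value_eq : x (Fin.last r) + (c - (x (Fin.last r) + middleForm K r α β x)) +
      middleForm K r α β x = c := by ring
  rwa [affEq_iff_pow_card_eq_self h, middleForm_add_single_last, Pi.add_apply, Pi.single_eq_same,
    value_eq]

end AffinePart

section Points

variable {F : Type*} [Field F]

theorem mk_mem_BsetE_iff {q : ℕ} {α β : F} {v : Fin (r + 1) → F} (hv : v 0 = 1) :
    Projectivization.mk F v (fun h => by simp [h] at hv) ∈ BsetE F q r α β ↔
      affEq q r α β v := by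
  obtain ⟨a, ha⟩ := Projectivization.exists_smul_eq_mk_rep F v (fun h => by simp [h] at hv)
  simp [BsetE, ← ha, hv, Units.smul_def]

theorem span_rep_BsetE {K : Type*} [Field K] [Fintype K] [Algebra K F] (h : finrank K F = 2)
    (hr : r ≠ 0) (α β : F) :
    Submodule.span F (Projectivization.rep '' BsetE F (Fintype.card K) r α β) = ⊤ := by
  set S := Submodule.span F (Projectivization.rep '' BsetE F (Fintype.card K) r α β)
  have mem_of_affEq {v : Fin (r + 1) → F} (hv0 : v 0 = 1)
      (hv : affEq (Fintype.card K) r α β v) : v ∈ S :=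
    mem_span_rep_of_mk_mem ((mk_mem_BsetE_iff hv0).mpr hv)
  have last_ne_zero : Fin.last r ≠ 0 := Fin.last_eq_zero_iff.not.mpr hr
  have mem_of_zero_eq_one {x : Fin (r + 1) → F} (hx : x 0 = 1) : x ∈ S := by
    let s := x (Fin.last r) + middleForm K r α β x
    have mem_of_pow_eq_self {c : F} (hc : c ^ Fintype.card K = c) :
        x + Pi.single (Fin.last r) (c - s) ∈ S :=
      mem_of_affEq (by simp [hx, last_ne_zero.symm]) (affEq_add_single_last h α β x hc)
    have mem_at_zero := mem_of_pow_eq_self (zero_pow Fintype.card_ne_zero)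
    have mem_at_one := mem_of_pow_eq_self (one_pow (Fintype.card K))
    have single_last_mem : Pi.single (Fin.last r) 1 ∈ S := by
      have := S.sub_mem mem_at_one mem_at_zero
      rwa [add_sub_add_left_eq_sub, ← Pi.single_sub, sub_sub_sub_cancel_right, sub_zero] at this
    simpa [← Pi.single_smul, add_assoc, ← Pi.single_add] using
      S.add_mem mem_at_zero (S.smul_mem s single_last_mem)
  refine Submodule.eq_top_iff'.mpr fun y => ?_
  have single_zero_mem : Pi.single 0 1 ∈ S := mem_of_zero_eq_one (Pi.single_eq_same 0 1)
  have shifted_mem : y + (1 - y 0) • Pi.single 0 1 ∈ S := mem_of_zero_eq_one (by simp)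
  exact (S.add_mem_iff_left (S.smul_mem _ single_zero_mem)).mp shifted_mem

/-- The functional `X ↦ X₁ + ⋯ + X_{r-1}`, whose zeros are the points at infinity of `B`. -/
def middleSum (F : Type*) [Field F] (r : ℕ) : Dual F (Fin (r + 1) → F) :=
  ∑ i ∈ Finset.Ioo 0 (Fin.last r), LinearMap.proj i

/-- The subspace of `F^(r+1)` underlying the part at infinity of `B`. -/
def infinitySubspace (F : Type*) [Field F] (r : ℕ) : Submodule F (Fin (r + 1) → F) :=
  LinearMap.ker (LinearMap.proj 0) ⊓ LinearMap.ker (middleSum F r)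

theorem middleSum_apply (x : Fin (r + 1) → F) :
    middleSum F r x = ∑ i ∈ Finset.Ioo 0 (Fin.last r), x i := by
  simp [middleSum]

theorem finrank_infinitySubspace (hr : 2 ≤ r) : finrank F (infinitySubspace F r) = r - 1 := by
  let π : (Fin (r + 1) → F) →ₗ[F] F × F := (LinearMap.proj 0).prod (middleSum F r)
  have surjective : Function.Surjective π := by
    rintro ⟨a, b⟩
    have hi : (⟨1, by omega⟩ : Fin (r + 1)) ∈ Finset.Ioo 0 (Fin.last r) :=
      Finset.mem_Ioo.mpr ⟨Nat.one_pos, hr⟩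
    have hi0 := (Finset.mem_Ioo.mp hi).1.ne
    refine ⟨Pi.single 0 a + Pi.single ⟨1, by omega⟩ b, ?_⟩
    simp [π, middleSum_apply, Finset.sum_add_distrib, Finset.sum_pi_single', hi, hi0]
  have rank_nullity := π.finrank_range_add_finrank_ker
  rw [LinearMap.range_eq_top.mpr surjective, finrank_top, finrank_prod, finrank_self,
    finrank_fin_fun, LinearMap.ker_prod] at rank_nullity
  unfold infinitySubspace
  omega

theorem mem_BsetE_iff {q : ℕ} {α β : F} {P : ℙ F (Fin (r + 1) → F)} :
    P ∈ BsetE F q r α β ↔ (P.rep 0 ≠ 0 ∧ affEq q r α β ((P.rep 0)⁻¹ • P.rep)) ∨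
      P.rep ∈ infinitySubspace F r := by
  have affine_coords : (fun i => P.rep i / P.rep 0) = (P.rep 0)⁻¹ • P.rep :=
    funext fun i => div_eq_inv_mul _ _
  rw [BsetE, Set.mem_ofPred_eq, affine_coords, sum_ite_eq_sum_Ioo, ← middleSum_apply]
  rfl

theorem natCard_BsetE_inter [Finite F] (q : ℕ) (α β : F) (f : Dual F (Fin (r + 1) → F)) :
    Nat.card ↥(BsetE F q r α β ∩ {P | f P.rep = 0}) =
      Nat.card {v : Fin (r + 1) → F // v 0 = 1 ∧ affEq q r α β v ∧ f v = 0} +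
        Nat.card (ℙ F ↥(infinitySubspace F r ⊓ LinearMap.ker f)) := by
  have inter_iff (P : ℙ F (Fin (r + 1) → F)) : P ∈ BsetE F q r α β ∩ {P | f P.rep = 0} ↔
      (P.rep 0 ≠ 0 ∧ affEq q r α β ((P.rep 0)⁻¹ • P.rep) ∧ f ((P.rep 0)⁻¹ • P.rep) = 0) ∨
        P.rep ∈ infinitySubspace F r ⊓ LinearMap.ker f := by
    have map_inv_smul (h0 : P.rep 0 ≠ 0) : f ((P.rep 0)⁻¹ • P.rep) = 0 ↔ f P.rep = 0 := by
      simp [h0]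
    rw [Set.mem_inter_iff, mem_BsetE_iff, Set.mem_ofPred_eq, Submodule.mem_inf,
      LinearMap.mem_ker]
    tauto
  exact (Nat.card_congr (Equiv.subtypeEquivRight inter_iff)).trans <|
    natCard_affine_or_mem (LinearMap.proj 0) (fun v => affEq q r α β v ∧ f v = 0)
      (inf_le_left.trans inf_le_left)

variable {K : Type*} [Field K] [Fintype K] [Algebra K F]

theorem natCard_BsetE (h : finrank K F = 2) (hr : 2 ≤ r) (α β : F) :
    Nat.card ↥(BsetE F (Fintype.card K) r α β) =
      Fintype.card K ^ (2 * r - 1) + ∑ i ∈ Finset.range (r - 1), Fintype.card K ^ (2 * i) := by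
  have := FiniteDimensional.of_finrank_pos (K := K) (V := F) (by omega)
  have := Module.finite_of_finite K (M := F)
  have card_F : Nat.card F = Fintype.card K ^ 2 := by
    rw [natCard_eq_pow_finrank (K := K), h, Nat.card_eq_fintype_card]
  have split := natCard_BsetE_inter (Fintype.card K) α β (0 : Dual F (Fin (r + 1) → F))
  simp only [LinearMap.zero_apply, Set.ofPred_true, Set.inter_univ, and_true] at split
  rw [split, LinearMap.ker_zero, inf_top_eq, natCard_affEq h (by omega),
    Projectivization.card_of_finrank F _ (finrank_infinitySubspace hr), card_F]
  simp only [pow_mul]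

theorem natCard_BsetE_inter_modEq_one (h : finrank K F = 2) (hr : 3 ≤ r) (α β : F)
    (f : Dual F (Fin (r + 1) → F)) :
    Nat.card ↥(BsetE F (Fintype.card K) r α β ∩ {P | f P.rep = 0}) ≡ 1
      [MOD Fintype.card K] := by
  have := FiniteDimensional.of_finrank_pos (K := K) (V := F) (by omega)
  have := Module.finite_of_finite K (M := F)
  have card_dvd : Fintype.card K ∣ Nat.card F := by
    rw [natCard_eq_pow_finrank (K := K) (V := F), h, Nat.card_eq_fintype_card]
    exact dvd_pow_self _ two_ne_zero
  have finrank_infinity : finrank F ↥(infinitySubspace F r ⊓ LinearMap.ker f) ≠ 0 := by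
    have := finrank_le_finrank_inf_ker_add_one (infinitySubspace F r) f
    rw [finrank_infinitySubspace (by omega)] at this
    omega
  rw [natCard_BsetE_inter]
  exact (Nat.modEq_zero_iff_dvd.mpr (natCard_dvd_natCard_affEq_section h hr α β f)).add
    ((natCard_projectivization_modEq_one finrank_infinity).of_dvd card_dvd)

end Points

end Hypersurface

theorem statement9_general (q r : ℕ) (hq : IsPrimePow q) (hr : 3 ≤ r) (F : Type*) [Field F]
    [Fintype F] (hF : Fintype.card F = q ^ 2) (α β : F) :
    Submodule.span F (Projectivization.rep '' BsetE F q r α β) = ⊤ ∧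
    Nat.card ↥(BsetE F q r α β) =
      q ^ (2 * r - 1) + ∑ i ∈ Finset.range (r - 1), q ^ (2 * i) ∧
    Module.finrank F ↥(LinearMap.range (codeMap (BsetE F q r α β))) = r + 1 ∧
    (∀ f : Module.Dual F (Fin (r + 1) → F),
      q ∣ Nat.card ↥(BsetE F q r α β) -
        Nat.card ↥(BsetE F q r α β ∩ {P | f P.rep = 0})) := by
  rw [← Nat.card_eq_fintype_card] at hF
  obtain ⟨K, hK⟩ := exists_subfield_natCard_eq hq hF
  have := Fintype.ofFinite K
  obtain rfl : Fintype.card K = q := Nat.card_eq_fintype_card.symm.trans hK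
  have finrank_F : finrank K F = 2 := Nat.pow_right_injective hq.two_le <| by
    simp only [← hF, natCard_eq_pow_finrank (K := K) (V := F), hK]
  have span_eq_top := span_rep_BsetE finrank_F (by omega : r ≠ 0) α β
  have modEq_one := natCard_BsetE_inter_modEq_one finrank_F hr α β
  refine ⟨span_eq_top, natCard_BsetE finrank_F (by omega) α β, ?_, fun f => ?_⟩
  · rw [finrank_range_codeMap span_eq_top, finrank_fin_fun]
  · have card_modEq_one : Nat.card ↥(BsetE F (Fintype.card K) r α β) ≡ 1 [MOD Fintype.card K] := by
      simpa using modEq_one 0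
    exact (Nat.modEq_iff_dvd' (Nat.card_mono (Set.toFinite _) Set.inter_subset_left)).mp
      ((modEq_one f).trans card_modEq_one.symm)

/-- for `q > 2` even and `r ≥ 3`, the hypersurface `B` spans
`PG(r,q²)`, the projective code `C(B)` has length
`N = q^{2r−1}+q^{2(r−2)}+⋯+q²+1` and dimension `r+1`, and it is `q`-divisible. -/
theorem statement9 (q r : ℕ) (hq : IsPrimePow q) (hqeven : Even q) (hq2 : 2 < q)
    (hr : 3 ≤ r)
    (F : Type) [Field F] [Fintype F] (hF : Fintype.card F = q ^ 2)
    (α β : F) (hα : α ≠ 0) (hβ : β ^ q ≠ β)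
    (hcond : Odd r ∨ (Even r ∧ ∀ m : ℕ, q = 2 ^ m →
      ∑ i ∈ Finset.range m, (α ^ (q + 1) / (β ^ q + β) ^ 2) ^ 2 ^ i = 0)) :
    Submodule.span F (Projectivization.rep '' BsetE F q r α β) = ⊤ ∧
    Nat.card ↥(BsetE F q r α β) =
      q ^ (2 * r - 1) + ∑ i ∈ Finset.range (r - 1), q ^ (2 * i) ∧
    Module.finrank F ↥(LinearMap.range (codeMap (BsetE F q r α β))) = r + 1 ∧
    (∀ f : Module.Dual F (Fin (r + 1) → F), f ≠ 0 →
      q ∣ Nat.card ↥(BsetE F q r α β) -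
        Nat.card ↥(BsetE F q r α β ∩ {P | f P.rep = 0})) :=
  have ⟨span_eq_top, card_eq, finrank_eq, dvd⟩ := statement9_general q r hq hr F hF α β
  ⟨span_eq_top, card_eq, finrank_eq, fun f _ => dvd f⟩
end

section
/- Let q be a prime power, let H be a quasi-Hermitian variety of PG(3,q²), and let P be a point of H. Then P lies on exactly q³+q²+1 planes meeting H in q³+q²+1 points and on exactly q⁴−q³ planes meeting H in q³+1 points. -/
/-!
Count the incident pairs `(Q, W)` with `Q` a point of `H` and `W` a plane through `P`. Every plane
through `P` contains `P`, and the planes through `P` and another point `Q` are the planes through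
the line `PQ`, so their number does not depend on `Q`. This gives the sum of `|H ∩ W|` over the
planes `W` through `P`, and as `|H ∩ W|` takes only two values, the sum determines how often each
of them occurs.
-/

open Module Finset

section DoubleCounting

variable {α β : Type*} (r : α → β → Prop) [∀ a b, Decidable (r a b)]

theorem sum_card_bipartiteAbove_of_card_bipartiteBelow {s : Finset α} {t : Finset β} {p : β}
    {l : ℕ} (hp : p ∈ t) (hps : ∀ a ∈ s, r a p)
    (hl : ∀ b ∈ t, b ≠ p → #(s.bipartiteBelow r b) = l) :
    ∑ a ∈ s, #(t.bipartiteAbove r a) = #s + (#t - 1) * l := by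
  classical
  have hp_below : s.bipartiteBelow r p = s := filter_true_of_mem hps
  have hl' : ∀ b ∈ t.erase p, #(s.bipartiteBelow r b) = l := fun b hb =>
    hl b (mem_of_mem_erase hb) (ne_of_mem_erase hb)
  rw [sum_card_bipartiteAbove_eq_sum_card_bipartiteBelow, ← add_sum_erase _ _ hp, hp_below,
    sum_const_nat hl', card_erase_of_mem hp]

end DoubleCounting

section TwoValues

variable {α : Type*} {s : Finset α} {f : α → ℕ} {a m : ℕ}

theorem sum_eq_card_mul_add_of_eq_or_eq_add (h : ∀ x ∈ s, f x = a ∨ f x = a + m) :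
    ∑ x ∈ s, f x = #s * a + #{x ∈ s | f x = a + m} * m := by
  have hf : ∀ x ∈ s, f x = a + if f x = a + m then m else 0 := by
    intro x hx
    rcases h x hx with hx | hx <;> simp +contextual [hx]
  rw [sum_congr rfl hf, sum_add_distrib, ← sum_filter, sum_const, sum_const, smul_eq_mul,
    smul_eq_mul]

theorem card_filter_add_card_filter_of_eq_or_eq_add (hm : m ≠ 0)
    (h : ∀ x ∈ s, f x = a ∨ f x = a + m) :
    #{x ∈ s | f x = a + m} + #{x ∈ s | f x = a} = #s := by
  rw [← card_filter_add_card_filter_not (s := s) (fun x => f x = a + m)]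
  congr 2
  refine filter_congr fun x hx => ?_
  rcases h x hx with hx | hx <;> simp [hx, hm]

end TwoValues

section Hyperplanes

variable {F V : Type*} [Field F] [AddCommGroup V] [Module F V]

theorem isCoatom_iff_finrank_quotient_eq_one {W : Submodule F V} :
    IsCoatom W ↔ finrank F (V ⧸ W) = 1 := by
  rw [← isSimpleModule_iff_isCoatom, isSimpleModule_iff_finrank_eq_one]

theorem isCoatom_iff_finrank_add_one_eq [FiniteDimensional F V] {W : Submodule F V} :
    IsCoatom W ↔ finrank F W + 1 = finrank F V := by
  rw [isCoatom_iff_finrank_quotient_eq_one, ← W.finrank_quotient_add_finrank]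
  omega

theorem isCoatom_iff_finrank_dualAnnihilator_eq_one [FiniteDimensional F V] {W : Submodule F V} :
    IsCoatom W ↔ finrank F W.dualAnnihilator = 1 := by
  rw [isCoatom_iff_finrank_add_one_eq, ← Subspace.finrank_add_finrank_dualAnnihilator_eq W]
  omega

variable (F V) in
theorem card_isCoatom [Finite F] [FiniteDimensional F V] :
    Nat.card {W : Submodule F V // IsCoatom W} = ∑ i ∈ range (finrank F V), Nat.card F ^ i := by
  rw [← Projectivization.card_of_finrank F (Dual F V) Subspace.dual_finrank_eq]
  refine Nat.card_congr (Equiv.trans ?_ (Projectivization.equivSubmodule F (Dual F V)).symm)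
  exact (Subspace.orderIsoFiniteDimensional.toEquiv.trans OrderDual.ofDual).subtypeEquiv
    fun _ => isCoatom_iff_finrank_dualAnnihilator_eq_one

theorem card_isCoatom_and_le [Finite F] [FiniteDimensional F V] (U : Submodule F V) :
    Nat.card {W : Submodule F V // IsCoatom W ∧ U ≤ W} =
      ∑ i ∈ range (finrank F V - finrank F U), Nat.card F ^ i := by
  rw [← U.finrank_quotient, ← card_isCoatom F (V ⧸ U)]
  let e : {W : Submodule F (V ⧸ U) // IsCoatom W} ≃ {W : Set.Ici U // IsCoatom W.1} :=
    U.comapMkQRelIso.toEquiv.subtypeEquiv fun _ =>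
      (Submodule.isCoatom_comap_iff U.mkQ_surjective).symm
  exact Nat.card_congr <| (Equiv.subtypeEquivRight fun _ => and_comm).trans <|
    (Equiv.subtypeSubtypeEquivSubtypeInter (U ≤ ·) IsCoatom).symm.trans e.symm

theorem finrank_span_pair_rep {P Q : Projectivization F V} (h : P ≠ Q) :
    finrank F (Submodule.span F {P.rep, Q.rep}) = 2 := by
  have hPQ := finrank_span_eq_card (Projectivization.linearIndependent_pair_iff_ne.2 h)
  rwa [Matrix.range_cons_cons_empty, Fintype.card_fin] at hPQ

end Hyperplanes

section Sections

variable {F V : Type*} [Field F] [AddCommGroup V] [Module F V] [Finite V]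

/-- The hyperplanes of the projective space `ℙ(V)` through the point `P`, represented by the
coatoms of the lattice of linear subspaces of `V`; a finset, so that sums over them make sense. -/
noncomputable def hyperplanesThrough (P : Projectivization F V) : Finset (Submodule F V) :=
  (Set.toFinite {W : Submodule F V | IsCoatom W ∧ P.rep ∈ W}).toFinset

theorem mem_hyperplanesThrough {P : Projectivization F V} {W : Submodule F V} :
    W ∈ hyperplanesThrough P ↔ IsCoatom W ∧ P.rep ∈ W := by
  simp only [hyperplanesThrough, Set.Finite.mem_toFinset, Set.mem_ofPred_eq]

theorem mem_hyperplanesThrough_iff_of_finrank_eq {n : ℕ} (hV : finrank F V = n + 1)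
    {P : Projectivization F V} {W : Submodule F V} :
    W ∈ hyperplanesThrough P ↔ finrank F W = n ∧ P.rep ∈ W := by
  rw [mem_hyperplanesThrough, isCoatom_iff_finrank_add_one_eq, hV, Nat.succ_inj]

theorem ncard_setOf_finrank_eq_and_rep_mem_and {n : ℕ} (hV : finrank F V = n + 1)
    (P : Projectivization F V) (p : Submodule F V → Prop) [DecidablePred p] :
    {W : Submodule F V | finrank F W = n ∧ P.rep ∈ W ∧ p W}.ncard =
      #{W ∈ hyperplanesThrough P | p W} := by
  simp only [← Set.ncard_coe_finset, coe_filter, mem_hyperplanesThrough_iff_of_finrank_eq hV,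
    and_assoc]

variable [Finite F]

theorem card_hyperplanesThrough (P : Projectivization F V) :
    #(hyperplanesThrough P) = ∑ i ∈ range (finrank F V - 1), Nat.card F ^ i := by
  rw [← finrank_span_singleton (K := F) P.rep_nonzero, ← card_isCoatom_and_le]
  refine (Nat.subtype_card _ fun W => ?_).symm
  rw [mem_hyperplanesThrough, Submodule.span_singleton_le_iff_mem]

open scoped Classical in
theorem card_filter_rep_mem_hyperplanesThrough {P Q : Projectivization F V} (h : P ≠ Q) :
    #{W ∈ hyperplanesThrough P | Q.rep ∈ W} = ∑ i ∈ range (finrank F V - 2), Nat.card F ^ i := by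
  rw [← finrank_span_pair_rep h, ← card_isCoatom_and_le]
  refine (Nat.subtype_card _ fun W => ?_).symm
  simp only [mem_filter, mem_hyperplanesThrough, Submodule.span_le, Set.pair_subset_iff,
    SetLike.mem_coe, and_assoc]

theorem sum_ncard_inter_hyperplanesThrough {H : Set (Projectivization F V)}
    {P : Projectivization F V} (hP : P ∈ H) :
    ∑ W ∈ hyperplanesThrough P, (H ∩ {Q | Q.rep ∈ W}).ncard =
      ∑ i ∈ range (finrank F V - 1), Nat.card F ^ i +
        (H.ncard - 1) * ∑ i ∈ range (finrank F V - 2), Nat.card F ^ i := by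
  classical
  have : Fintype (Projectivization F V) := Fintype.ofFinite _
  let incident (W : Submodule F V) (Q : Projectivization F V) : Prop := Q.rep ∈ W
  have hthrough : ∀ W ∈ hyperplanesThrough P, incident W P := fun W hW =>
    (mem_hyperplanesThrough.1 hW).2
  have hpairs : ∀ Q ∈ H.toFinset, Q ≠ P → #((hyperplanesThrough P).bipartiteBelow incident Q) =
      ∑ i ∈ range (finrank F V - 2), Nat.card F ^ i := fun Q _ hQ =>
    card_filter_rep_mem_hyperplanesThrough hQ.symm
  have hcount := sum_card_bipartiteAbove_of_card_bipartiteBelow incident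
    (Set.mem_toFinset.2 hP) hthrough hpairs
  rw [← card_hyperplanesThrough P, Set.ncard_eq_toFinset_card' H, ← hcount]
  refine sum_congr rfl fun W _ => ?_
  rw [← Set.ncard_coe_finset, coe_bipartiteAbove]
  simp only [Set.mem_toFinset, Set.inter_def, Set.mem_ofPred_eq, incident]

theorem card_filter_ncard_inter_hyperplanesThrough_mul {H : Set (Projectivization F V)}
    {P : Projectivization F V} (hP : P ∈ H) {a m : ℕ}
    (h : ∀ W ∈ hyperplanesThrough P, (H ∩ {Q | Q.rep ∈ W}).ncard = a ∨
      (H ∩ {Q | Q.rep ∈ W}).ncard = a + m) :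
    (∑ i ∈ range (finrank F V - 1), Nat.card F ^ i) * a +
        #{W ∈ hyperplanesThrough P | (H ∩ {Q | Q.rep ∈ W}).ncard = a + m} * m =
      ∑ i ∈ range (finrank F V - 1), Nat.card F ^ i +
        (H.ncard - 1) * ∑ i ∈ range (finrank F V - 2), Nat.card F ^ i := by
  rw [← sum_ncard_inter_hyperplanesThrough hP, sum_eq_card_mul_add_of_eq_or_eq_add h,
    card_hyperplanesThrough]

end Sections

theorem statement13_general {F V : Type*} [Field F] [Finite F] [AddCommGroup V] [Module F V]
    (hV : finrank F V = 4) {q : ℕ} (hF : Nat.card F = q ^ 2) {H : Set (Projectivization F V)}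
    (hH : H.ncard = (q ^ 3 + 1) * (q ^ 2 + 1)) {P : Projectivization F V} (hP : P ∈ H)
    (hplane : ∀ W : Submodule F V, finrank F W = 3 → P.rep ∈ W →
      (H ∩ {Q | Q.rep ∈ W}).ncard = q ^ 3 + 1 ∨
      (H ∩ {Q | Q.rep ∈ W}).ncard = q ^ 3 + q ^ 2 + 1) :
    {W : Submodule F V | finrank F W = 3 ∧ P.rep ∈ W ∧
        (H ∩ {Q | Q.rep ∈ W}).ncard = q ^ 3 + q ^ 2 + 1}.ncard = q ^ 3 + q ^ 2 + 1 ∧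
      {W : Submodule F V | finrank F W = 3 ∧ P.rep ∈ W ∧
        (H ∩ {Q | Q.rep ∈ W}).ncard = q ^ 3 + 1}.ncard = q ^ 4 - q ^ 3 := by
  have : FiniteDimensional F V := Module.finite_of_finrank_eq_succ hV
  have : Finite V := Module.finite_of_finite F
  have hq : q ^ 2 ≠ 0 := hF ▸ Nat.card_pos.ne'
  have hvalues : ∀ W ∈ hyperplanesThrough P, (H ∩ {Q | Q.rep ∈ W}).ncard = q ^ 3 + 1 ∨
      (H ∩ {Q | Q.rep ∈ W}).ncard = q ^ 3 + 1 + q ^ 2 := by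
    intro W hW
    obtain ⟨hW3, hPW⟩ := (mem_hyperplanesThrough_iff_of_finrank_eq hV).1 hW
    simpa only [add_right_comm] using hplane W hW3 hPW
  have hsum := card_filter_ncard_inter_hyperplanesThrough_mul hP hvalues
  have htotal := card_filter_add_card_filter_of_eq_or_eq_add hq hvalues
  rw [card_hyperplanesThrough] at htotal
  have hH' : H.ncard - 1 = q ^ 5 + q ^ 3 + q ^ 2 := by
    rw [hH]
    exact Nat.sub_eq_of_eq_add (by ring)
  simp only [hV, hF, hH', Nat.reduceSub, sum_range_succ, range_zero, sum_empty] at hsum htotal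
  rw [ncard_setOf_finrank_eq_and_rep_mem_and hV, ncard_setOf_finrank_eq_and_rep_mem_and hV,
    add_right_comm]
  have hlarge : #{W ∈ hyperplanesThrough P |
      (H ∩ {Q | Q.rep ∈ W}).ncard = q ^ 3 + 1 + q ^ 2} = q ^ 3 + 1 + q ^ 2 :=
    Nat.eq_of_mul_eq_mul_right (Nat.pos_of_ne_zero hq) (by linarith)
  exact ⟨hlarge, Nat.eq_sub_of_add_eq (by linarith)⟩

/-- every point `P₀` of a quasi-Hermitian variety `H` of `PG(3,q²)`
lies on exactly `q³+q²+1` planes meeting `H` in `q³+q²+1` points and on exactly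
`q⁴−q³` planes meeting `H` in `q³+1` points. -/
theorem statement13 (q : ℕ) (hq : IsPrimePow q)
    (F : Type) [Field F] [Fintype F] (hF : Fintype.card F = q ^ 2)
    (H : Set (Projectivization F (Fin 4 → F)))
    (hcard : Nat.card ↥H = (q ^ 3 + 1) * (q ^ 2 + 1))
    (hplane : ∀ W : Submodule F (Fin 4 → F), Module.finrank F W = 3 →
      Nat.card ↥(H ∩ {P | P.rep ∈ W}) = q ^ 3 + 1 ∨
      Nat.card ↥(H ∩ {P | P.rep ∈ W}) = q ^ 3 + q ^ 2 + 1)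
    (P₀ : Projectivization F (Fin 4 → F)) (hP₀ : P₀ ∈ H) :
    Nat.card {W : Submodule F (Fin 4 → F) | Module.finrank F W = 3 ∧ P₀.rep ∈ W ∧
        Nat.card ↥(H ∩ {P | P.rep ∈ W}) = q ^ 3 + q ^ 2 + 1} = q ^ 3 + q ^ 2 + 1 ∧
    Nat.card {W : Submodule F (Fin 4 → F) | Module.finrank F W = 3 ∧ P₀.rep ∈ W ∧
        Nat.card ↥(H ∩ {P | P.rep ∈ W}) = q ^ 3 + 1} = q ^ 4 - q ^ 3 := by
  simp only [Nat.card_coe_set_eq] at hcard hplane ⊢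
  exact statement13_general (finrank_fin_fun F) (Nat.card_eq_fintype_card.trans hF) hcard hP₀
    fun W hW _ => hplane W hW
end

section
/- Let g₀, g₁, …, g_{n−1} ∈ GF(q)^k, let C = {uG : u ∈ GF(q)^k} be the linear code with generator matrix G having columns g₀,…,g_{n−1}, and let C^⊥ = {d ∈ GF(q)^n : Σ_{i=0}^{n−1} d_i g_i = 0} be its dual. Then for any subset S ⊆ {1, …, n−1}, the vector g₀ lies in the linear span of {g_i : i ∈ S} if and only if there exists d ∈ C^⊥ with d₀ = 1 and d_j = 0 for all j ∉ {0} ∪ S. -/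
/-!
Coefficient vectors `c` supported on `S` with `∑ c i • v i = v i₀` correspond to the required dual
codewords `d` under the involution `c = e - d`, where `e` is the unit vector at `i₀`.
-/

section MasseyCriterion

variable {ι R M : Type*} [Ring R] [AddCommGroup M] [Module R M]

theorem single_one_sub_mem_supported_iff {S : Set ι} {i₀ : ι} (hi₀ : i₀ ∉ S) (d : ι →₀ R) :
    Finsupp.single i₀ 1 - d ∈ Finsupp.supported R R S ↔
      d i₀ = 1 ∧ ∀ j, j ≠ i₀ → j ∉ S → d j = 0 := by
  rw [Finsupp.mem_supported']
  constructor
  · intro h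
    refine ⟨?_, fun j hj hjS => ?_⟩
    · simpa [sub_eq_zero, eq_comm (a := (1 : R))] using h i₀ hi₀
    · simpa [hj] using h j hjS
  · rintro ⟨hd₀, hd⟩ j hjS
    obtain rfl | hj := eq_or_ne j i₀
    · simp [hd₀]
    · simp [hj, hd j hj hjS]

theorem linearCombination_single_one_sub_eq_iff (v : ι → M) (i₀ : ι) (d : ι →₀ R) :
    Finsupp.linearCombination R v (Finsupp.single i₀ 1 - d) = v i₀ ↔
      Finsupp.linearCombination R v d = 0 := by
  rw [map_sub, Finsupp.linearCombination_single, one_smul, sub_eq_self]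

theorem statement16_general (v : ι → M) {S : Set ι} {i₀ : ι} (hi₀ : i₀ ∉ S) :
    v i₀ ∈ Submodule.span R (v '' S) ↔
      ∃ d : ι →₀ R, Finsupp.linearCombination R v d = 0 ∧ d i₀ = 1 ∧
        ∀ j, j ≠ i₀ → j ∉ S → d j = 0 := by
  rw [Finsupp.mem_span_image_iff_linearCombination,
    ← (Equiv.subLeft (Finsupp.single i₀ (1 : R))).exists_congr_right]
  refine exists_congr fun d => ?_
  rw [Equiv.subLeft_apply, single_one_sub_mem_supported_iff hi₀,
    linearCombination_single_one_sub_eq_iff, and_comm]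

end MasseyCriterion

/-- Massey's criterion.  For columns `g 0, …, g (n−1)` of a generator
matrix of the code `C`, and any set `S` of positions not containing `0`, the vector
`g 0` lies in the span of `{g i : i ∈ S}` iff there is a dual codeword `d ∈ C^⊥`
(i.e. `∑ i, d i • g i = 0`) with `d 0 = 1` vanishing outside `{0} ∪ S`. -/
theorem statement16 (q n k : ℕ) [NeZero n] (hq : IsPrimePow q)
    (F : Type) [Field F] [Fintype F] (hF : Fintype.card F = q)
    (g : Fin n → (Fin k → F)) (S : Set (Fin n)) (hS : (0 : Fin n) ∉ S) :
    g 0 ∈ Submodule.span F (g '' S) ↔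
      ∃ d : Fin n → F, (∑ i : Fin n, d i • g i = 0) ∧ d 0 = 1 ∧
        ∀ j : Fin n, j ≠ 0 → j ∉ S → d j = 0 := by
  refine (statement16_general g hS).trans (Finsupp.equivFunOnFinite.exists_congr fun d => ?_)
  simp [Finsupp.linearCombination_apply, Finsupp.sum_fintype]
end
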